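/- arXiv:2304.04001 — 3 statements merged into one kernel-verified Lean document; each statement's English description precedes it below -/
import Mathlib

section
/- Let q ≥ 1 and suppose K_q(a,b,c) ≠ 0. Then f has no q-periodic points other than fixed points: if x ∈ ℝ is such that the iterates f(x), f²(x), …, f^q(x) are all defined and f^q(x) = x, then f(x) = x. -/
/-!
The Möbius map `f` of a `2 × 2` matrix `M` describes how `M` acts on slopes: `M (x, 1)` is a
multiple of `(f x, 1)`. Hence `f` fixes `x` exactly when `(x, 1)` is an eigenvector of `M`, and a
point of period `q` gives an eigenvector of `M ^ q`. By Cayley–Hamilton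
`M ^ q = K q • M - e • 1` for some scalar `e`, so if `K q ≠ 0`, then `M` and `M ^ q` have the same
eigenvectors.
-/

open Function Matrix

theorem pow_succ_eq_smul_sub_smul_one {R A : Type*} [CommRing R] [Ring A] [Algebra R A] {a : A}
    {t d : R} (ha : a ^ 2 = t • a - d • 1) {K : ℕ → R} (hK1 : K 1 = 1) (hK2 : K 2 = t)
    (hKrec : ∀ n, K (n + 2) = t * K (n + 1) - d * K n) (n : ℕ) :
    a ^ (n + 1) = K (n + 1) • a - (d * K n) • 1 := by
  induction n with
  | zero =>
    -- If `d` is a zero divisor, the recursion does not force `K 0 = 0`, only `d * K 0 = 0`.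
    have hK0 : d * K 0 = 0 := by linear_combination hKrec 0 - hK2 + t * hK1
    simp [hK0, hK1]
  | succ n ih =>
    calc a ^ (n + 1 + 1) = K (n + 1) • a ^ 2 - (d * K n) • a := by
          rw [pow_succ, ih, sub_mul, smul_mul_assoc, smul_mul_assoc, one_mul, sq]
      _ = K (n + 1 + 1) • a - (d * K (n + 1)) • 1 := by
          rw [ha, hKrec]
          module

theorem sq_eq_trace_smul_sub_det_smul_one {R : Type*} [CommRing R]
    (M : Matrix (Fin 2) (Fin 2) R) : M ^ 2 = M.trace • M - M.det • 1 := by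
  nontriviality R
  have cayleyHamilton : M ^ 2 - M.trace • M + M.det • 1 = 0 := by
    simpa [charpoly_fin_two, Algebra.algebraMap_eq_smul_one] using M.aeval_self_charpoly
  rw [← sub_eq_zero, ← cayleyHamilton]
  module

section Field

variable {F : Type*} [Field F]

theorem mulVec_eq_smul_of_smul_sub_smul_one_mulVec_eq_smul {n : Type*} [Fintype n] [DecidableEq n]
    {M : Matrix n n F} {v : n → F} {k e μ : F} (hk : k ≠ 0)
    (h : (k • M - e • (1 : Matrix n n F)) *ᵥ v = μ • v) : M *ᵥ v = (k⁻¹ * (μ + e)) • v := by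
  rw [sub_mulVec, smul_mulVec, smul_mulVec, one_mulVec, sub_eq_iff_eq_add, ← add_smul] at h
  rwa [mul_smul, eq_inv_smul_iff₀ hk]

theorem mul_add_ne_zero_iff_ne_neg_div {b c y : F} (hb : b ≠ 0) :
    b * y + c ≠ 0 ↔ y ≠ -c / b := by
  rw [Ne, Ne, eq_div_iff hb, mul_comm y, add_eq_zero_iff_eq_neg]

variable {M : Matrix (Fin 2) (Fin 2) F} {x : F}

/-- The Möbius (fractional linear) transformation `x ↦ (αx + β) / (γx + δ)` defined by the matrix
`!![α, β; γ, δ]`, used to turn orbits of such a map into orbits of vectors. No point at infinity is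
added and the matrix may be singular; at a pole the value is the junk value `0`. -/
def mobius (M : Matrix (Fin 2) (Fin 2) F) (x : F) : F :=
  (M 0 0 * x + M 0 1) / (M 1 0 * x + M 1 1)

theorem mulVec_eq_smul_mobius (hx : M 1 0 * x + M 1 1 ≠ 0) :
    M *ᵥ ![x, 1] = (M 1 0 * x + M 1 1) • ![mobius M x, 1] := by
  simp [mobius, mul_div_cancel₀, hx]

theorem isFixedPt_mobius_iff (hx : M 1 0 * x + M 1 1 ≠ 0) :
    IsFixedPt (mobius M) x ↔ ∃ μ : F, M *ᵥ ![x, 1] = μ • ![x, 1] := by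
  rw [mulVec_eq_smul_mobius hx]
  refine ⟨fun h => ⟨_, by rw [h.eq]⟩, fun ⟨μ, h⟩ => ?_⟩
  obtain ⟨hfst, rfl⟩ : (M 1 0 * x + M 1 1) * mobius M x = μ * x ∧ M 1 0 * x + M 1 1 = μ := by
    simpa using h
  exact mul_left_cancel₀ hx hfst

theorem exists_pow_mulVec_eq_smul_iterate_mobius {n : ℕ}
    (hx : ∀ i < n, M 1 0 * (mobius M)^[i] x + M 1 1 ≠ 0) :
    ∃ μ : F, (M ^ n) *ᵥ ![x, 1] = μ • ![(mobius M)^[n] x, 1] := by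
  induction n with
  | zero => exact ⟨1, by simp only [pow_zero, one_mulVec, iterate_zero_apply, one_smul]⟩
  | succ n ih =>
    obtain ⟨μ, hμ⟩ := ih fun i hi => hx i (hi.trans n.lt_succ_self)
    refine ⟨μ * (M 1 0 * (mobius M)^[n] x + M 1 1), ?_⟩
    rw [pow_succ', ← mulVec_mulVec, hμ, mulVec_smul, mulVec_eq_smul_mobius (hx n n.lt_succ_self),
      smul_smul, iterate_succ_apply']

theorem stmt4_general {K : ℕ → F} (hK1 : K 1 = 1) (hK2 : K 2 = M.trace)
    (hKrec : ∀ n, K (n + 2) = M.trace * K (n + 1) - M.det * K n) {q : ℕ} (hq : 1 ≤ q)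
    (hKq : K q ≠ 0) (hx : ∀ i < q, M 1 0 * (mobius M)^[i] x + M 1 1 ≠ 0)
    (hper : IsPeriodicPt (mobius M) q x) : IsFixedPt (mobius M) x := by
  refine (isFixedPt_mobius_iff (hx 0 hq)).2 ?_
  obtain ⟨μ, hμ⟩ := exists_pow_mulVec_eq_smul_iterate_mobius hx
  obtain ⟨n, rfl⟩ := Nat.exists_eq_add_of_le' hq
  rw [hper.eq, pow_succ_eq_smul_sub_smul_one (sq_eq_trace_smul_sub_det_smul_one M) hK1 hK2 hKrec]
    at hμ
  exact ⟨_, mulVec_eq_smul_of_smul_sub_smul_one_mulVec_eq_smul hKq hμ⟩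

end Field

/-- Fix `a b c : ℝ` with `b ≠ 0`, `c ≠ a*b`, `f x = (x+a)/(b*x+c)`
(defined for `x ≠ x̂ = -c/b`), and `K` defined by `K 1 = 1`, `K 2 = 1+c`,
`K (q+2) = (c+1)*K (q+1) - (c-ab)*K q`. Let `q ≥ 1` and suppose `K q ≠ 0`. Then `f`
has no `q`-periodic points other than fixed points: if `x ∈ ℝ` is such that the
iterates `f x, f² x, …, f^q x` are all defined (i.e. no iterate `f^[i] x`, `i < q`,
equals the pole `x̂`) and `f^[q] x = x`, then `f x = x`. -/
theorem stmt4 (a b c : ℝ) (hb : b ≠ 0) (hc : c ≠ a * b)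
    (f : ℝ → ℝ) (hf : ∀ x, f x = (x + a) / (b * x + c))
    (K : ℕ → ℝ) (hK1 : K 1 = 1) (hK2 : K 2 = 1 + c)
    (hKrec : ∀ q : ℕ, K (q + 2) = (c + 1) * K (q + 1) - (c - a * b) * K q)
    (q : ℕ) (hq : 1 ≤ q) (hKq : K q ≠ 0) :
    ∀ x : ℝ, (∀ i : ℕ, i < q → f^[i] x ≠ -c / b) → f^[q] x = x → f x = x := by
  intro x hpole hper
  obtain rfl : f = mobius !![1, a; b, c] := funext fun y => by simp [hf, mobius]
  exact stmt4_general hK1 (by simpa using hK2) (by simpa [add_comm c] using hKrec) hq hKq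
    (fun i hi => (mul_add_ne_zero_iff_ne_neg_div hb).2 (hpole i hi)) hper
end

section
/- Suppose D > 0 and |α| ≠ |β| (equivalently c ≠ -1). Then for every x ∈ ℝ \ ({x₁, x₂} ∪ 𝒫), the orbit converges: lim_{n→∞} f^n(x) = x₂ if |α| < |β|, and lim_{n→∞} f^n(x) = x₁ if |α| > |β|. -/
/-!
A linear fractional map multiplies the quotient `(x - p) / (x - q)` of the displacements from its
two fixed points `p` and `q` by a constant, the ratio of the two eigenvalues of its matrix. If this
ratio has norm less than `1`, then the quotient tends to `0` along every orbit that avoids the pole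
and does not start at `q`, so the orbit converges to `p`.
-/

open Filter Function Topology

/-- The linear fractional map `x ↦ (a x + b) / (c x + d)` of a field, with junk value `0` at its
pole; the map whose orbits are studied. -/
def linearFractional {K : Type*} [Field K] (a b c d x : K) : K :=
  (a * x + b) / (c * x + d)

theorem tendsto_of_tendsto_sub_div_sub {ι K : Type*} [Field K] [TopologicalSpace K]
    [IsTopologicalDivisionRing K] {l : Filter ι} {y : ι → K} {p q : K} (hpq : p ≠ q)
    (hy : ∀ᶠ i in l, y i ≠ q) (h : Tendsto (fun i => (y i - p) / (y i - q)) l (𝓝 0)) :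
    Tendsto y l (𝓝 p) := by
  -- Solve `w = (y - p) / (y - q)` for `y`.
  have hlim : Tendsto
      (fun i => p + (y i - p) / (y i - q) * (p - q) / (1 - (y i - p) / (y i - q))) l (𝓝 p) := by
    simpa using ((h.mul_const (p - q)).div (h.const_sub 1) (by simp)).const_add p
  refine hlim.congr' (hy.mono fun i hi => ?_)
  have hyq : y i - q ≠ 0 := sub_ne_zero.mpr hi
  have hpq' : p - q ≠ 0 := sub_ne_zero.mpr hpq
  rw [one_sub_div hyq, sub_sub_sub_cancel_left]
  field_simp
  ring

namespace linearFractional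

/-- The fixed point equation of `linearFractional a b c d`, cleared of its denominator. Away from
the pole it says that `p` is a fixed point; unlike `Function.IsFixedPt`, it does not see the junk
value at the pole. -/
def IsFixed {K : Type*} [Field K] (a b c d p : K) : Prop :=
  p * (c * p + d) = a * p + b

section Field

variable {K : Type*} [Field K] {a b c d p q s x : K}

theorem sub_eq_of_isFixed (hp : IsFixed a b c d p) (hx : c * x + d ≠ 0) :
    linearFractional a b c d x - p = (a - c * p) * (x - p) / (c * x + d) := by
  rw [linearFractional, div_sub' hx]
  congr 1
  unfold IsFixed at hp
  linear_combination -hp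

theorem sub_div_sub (hp : IsFixed a b c d p) (hq : IsFixed a b c d q) (hx : c * x + d ≠ 0) :
    (linearFractional a b c d x - p) / (linearFractional a b c d x - q) =
      (a - c * p) / (a - c * q) * ((x - p) / (x - q)) := by
  rw [sub_eq_of_isFixed hp hx, sub_eq_of_isFixed hq hx, div_div_div_cancel_right₀ hx,
    mul_div_mul_comm]

theorem iterate_sub_div_sub (hp : IsFixed a b c d p) (hq : IsFixed a b c d q)
    (hx : ∀ n, c * (linearFractional a b c d)^[n] x + d ≠ 0) (n : ℕ) :
    ((linearFractional a b c d)^[n] x - p) / ((linearFractional a b c d)^[n] x - q) =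
      ((a - c * p) / (a - c * q)) ^ n * ((x - p) / (x - q)) := by
  induction n with
  | zero => simp
  | succ n ih => rw [iterate_succ_apply', sub_div_sub hp hq (hx n), ih, pow_succ', mul_assoc]

theorem iterate_ne_of_isFixed (hq : IsFixed a b c d q) (hcq : a - c * q ≠ 0)
    (hxq : x ≠ q) (hx : ∀ n, c * (linearFractional a b c d)^[n] x + d ≠ 0) (n : ℕ) :
    (linearFractional a b c d)^[n] x ≠ q := by
  induction n with
  | zero => exact hxq
  | succ n ih =>
    rw [iterate_succ_apply', ← sub_ne_zero, sub_eq_of_isFixed hq (hx n)]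
    exact div_ne_zero (mul_ne_zero hcq (sub_ne_zero.mpr ih)) (hx n)

theorem isFixed_iff [NeZero (2 : K)] (hc : c ≠ 0) (hs : s ^ 2 = (d - a) ^ 2 + 4 * b * c) :
    IsFixed a b c d p ↔ p = (a - d + s) / (2 * c) ∨ p = (a - d - s) / (2 * c) := by
  have hdiscrim : discrim c (d - a) (-b) = s * s := by
    rw [discrim]
    linear_combination -hs
  rw [IsFixed, ← neg_sub d a, ← quadratic_eq_zero_iff hc hdiscrim, ← sub_eq_zero]
  ring_nf

end Field

theorem tendsto_iterate {K : Type*} [NormedField K] {a b c d p q x : K}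
    (hp : IsFixed a b c d p) (hq : IsFixed a b c d q)
    (hlt : ‖a - c * p‖ < ‖a - c * q‖) (hxq : x ≠ q)
    (hx : ∀ n, c * (linearFractional a b c d)^[n] x + d ≠ 0) :
    Tendsto (fun n => (linearFractional a b c d)^[n] x) atTop (𝓝 p) := by
  have hcq_pos : 0 < ‖a - c * q‖ := (norm_nonneg _).trans_lt hlt
  have hpq : p ≠ q := by
    rintro rfl
    exact hlt.false
  have hratio : ‖(a - c * p) / (a - c * q)‖ < 1 := by
    rwa [norm_div, div_lt_one hcq_pos]
  refine tendsto_of_tendsto_sub_div_sub hpq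
    (.of_forall (iterate_ne_of_isFixed hq (norm_pos_iff.mp hcq_pos) hxq hx)) ?_
  simp only [iterate_sub_div_sub hp hq hx]
  simpa only [zero_mul] using
    (tendsto_pow_atTop_nhds_zero_of_norm_lt_one hratio).mul_const ((x - p) / (x - q))

end linearFractional

theorem stmt6_general {K : Type*} [NormedField K] [NeZero (2 : K)] {a b c s : K} (hb : b ≠ 0)
    {f : K → K} (hf : ∀ x, f x = (x + a) / (b * x + c))
    (hs : s ^ 2 = (c - 1) ^ 2 + 4 * a * b) {x₁ x₂ α β : K}
    (hx₁ : x₁ = (1 - c + s) / (2 * b)) (hx₂ : x₂ = (1 - c - s) / (2 * b))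
    (hα : α = (1 + c + s) / 2) (hβ : β = (1 + c - s) / 2)
    {x : K} (hx : ∀ n : ℕ, f^[n] x ≠ -c / b) :
    (‖α‖ < ‖β‖ → x ≠ x₁ → Tendsto (fun n : ℕ => f^[n] x) atTop (𝓝 x₂)) ∧
      (‖β‖ < ‖α‖ → x ≠ x₂ → Tendsto (fun n : ℕ => f^[n] x) atTop (𝓝 x₁)) := by
  obtain rfl : f = linearFractional 1 a b c := by
    ext x
    rw [hf, linearFractional, one_mul]
  have hfix₁ := (linearFractional.isFixed_iff hb hs).mpr (.inl hx₁)
  have hfix₂ := (linearFractional.isFixed_iff hb hs).mpr (.inr hx₂)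
  have hβ_eq : β = 1 - b * x₁ := by
    rw [hβ, hx₁]
    field_simp
    ring
  have hα_eq : α = 1 - b * x₂ := by
    rw [hα, hx₂]
    field_simp
    ring
  have hpole (n : ℕ) : b * (linearFractional 1 a b c)^[n] x + c ≠ 0 := by
    rw [Ne, ← eq_neg_iff_add_eq_zero, mul_comm, ← eq_div_iff hb]
    exact hx n
  rw [hα_eq, hβ_eq]
  exact ⟨fun hlt hne => linearFractional.tendsto_iterate hfix₂ hfix₁ hlt hne hpole,
    fun hlt hne => linearFractional.tendsto_iterate hfix₁ hfix₂ hlt hne hpole⟩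

/-- Fix `a b c : ℝ` with `b ≠ 0`, `c ≠ a*b`, `f x = (x+a)/(b*x+c)`,
`𝒫 = {x | ∃ n, f^[n] x = -c/b}`, `D = (c-1)^2 + 4*a*b`. Suppose `D > 0` and, with
`x₁ = (1-c+√D)/(2b)`, `x₂ = (1-c-√D)/(2b)` (the fixed points of `f`),
`α = (1+c+√D)/2`, `β = (1+c-√D)/2`, suppose `|α| ≠ |β|`. Then for every
`x ∈ ℝ \ ({x₁, x₂} ∪ 𝒫)` the orbit converges: `f^[n] x → x₂` as `n → ∞` if
`|α| < |β|`, and `f^[n] x → x₁` if `|α| > |β|`. -/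
theorem stmt6 (a b c : ℝ) (hb : b ≠ 0) (hc : c ≠ a * b)
    (f : ℝ → ℝ) (hf : ∀ x, f x = (x + a) / (b * x + c))
    (P : Set ℝ) (hP : P = {x : ℝ | ∃ n : ℕ, f^[n] x = -c / b})
    (D : ℝ) (hD : D = (c - 1) ^ 2 + 4 * a * b) (hD0 : 0 < D)
    (x₁ x₂ α β : ℝ)
    (hx₁ : x₁ = (1 - c + Real.sqrt D) / (2 * b))
    (hx₂ : x₂ = (1 - c - Real.sqrt D) / (2 * b))
    (hα : α = (1 + c + Real.sqrt D) / 2)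
    (hβ : β = (1 + c - Real.sqrt D) / 2)
    (hαβ : |α| ≠ |β|) :
    ∀ x : ℝ, x ∉ ({x₁, x₂} : Set ℝ) ∪ P →
      (|α| < |β| → Filter.Tendsto (fun n : ℕ => f^[n] x) Filter.atTop (nhds x₂)) ∧
      (|α| > |β| → Filter.Tendsto (fun n : ℕ => f^[n] x) Filter.atTop (nhds x₁)) := by
  exact fun x hx =>
    (stmt6_general hb hf (by rw [Real.sq_sqrt hD0.le, hD]) hx₁ hx₂ hα hβ
      (fun n hn => hx (.inr (hP ▸ ⟨n, hn⟩)))).imp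
      (fun h hlt => h hlt fun he => hx (.inl (.inl he)))
      (fun h hlt => h hlt fun he => hx (.inl (.inr he)))
end

section
/- Let s ∈ ℂ_p satisfy s² = c - ab, suppose |b|_p < |s|_p, let x₁, x₂ ∈ ℂ_p be the fixed points of f (the roots of bx² + (c-1)x - a = 0), and suppose |f′(x_i)|_p = |(c-ab)/(bx_i + c)²|_p = 1 for i = 1, 2. Then for each i ∈ {1,2} the maximal Siegel disk of f at x_i is the open ball of radius |s/b|_p: (i) for every ρ with 0 < ρ < |s/b|_p and every x with |x - x_i|_p = ρ, the whole forward orbit of x is defined and |f^n(x) - x_i|_p = ρ for all n ≥ 1; (ii) the sphere S_{|s/b|_p}(x_i) is not invariant under f (indeed |x̂ - x_i|_p = |s/b|_p, so f is undefined at a point of this sphere). -/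
/-!
Let `x̂ = -c / b` be the pole of `f x = (d * x + a) / (b * x + c)`. Then
`f x - f z = (d * c - a * b) * (x - z) / ((b * x + c) * (b * z + c))`, and
`‖b * x + c‖ = ‖b‖ * ‖x̂ - x‖`. If `x` is closer to `z` than `x̂` is, then `‖x̂ - x‖ = ‖x̂ - z‖` by
the ultrametric inequality, so `f` scales the distance from `x` to `z` by exactly the norm of its
multiplier at `z`. Around an indifferent fixed point every sphere is thus invariant until its
radius reaches `‖x̂ - z‖`, which is `‖s / b‖` because `‖s‖ = ‖b * z + c‖`.
-/

open Metric Set Function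

section SiegelDisk

variable {X : Type*} [PseudoMetricSpace X] {f : X → X} {D : Set X} {z x : X} {r ρ : ℝ}

/-- The open ball of radius `r` at `z` is a Siegel disk of the map `f` with domain `D`: each smaller
sphere centered at `z` is contained in `D` and mapped into itself. The radius `0` is included, which
in a metric space forces the center of a disk of positive radius to be a fixed point. A partial map
is encoded as a total function `f` together with `D`, since a formula for `f` takes junk values
off `D`. -/
def IsSiegelDisk (f : X → X) (D : Set X) (z : X) (r : ℝ) : Prop :=
  ∀ ρ < r, sphere z ρ ⊆ D ∧ MapsTo f (sphere z ρ) (sphere z ρ)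

theorem IsSiegelDisk.iterate_mem (h : IsSiegelDisk f D z r) (hρ : ρ < r) (hx : x ∈ sphere z ρ)
    (n : ℕ) : f^[n] x ∈ D ∩ sphere z ρ :=
  have hn : f^[n] x ∈ sphere z ρ := (h ρ hρ).2.iterate n hx
  ⟨(h ρ hρ).1 hn, hn⟩

end SiegelDisk

section Field

variable {K : Type*} [Field K] {a b c d x y z : K}

/-- The Möbius map with matrix `!![d, a; b, c]`; the maps `(x + a) / (b * x + c)` are the case
`d = 1`. For `b ≠ 0` its value at the pole `-c / b` is the junk value `0`. -/
def moebius (d a b c x : K) : K :=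
  (d * x + a) / (b * x + c)

theorem moebius_sub_moebius (hx : b * x + c ≠ 0) (hy : b * y + c ≠ 0) :
    moebius d a b c x - moebius d a b c y =
      (d * c - a * b) * (x - y) / ((b * x + c) * (b * y + c)) := by
  rw [moebius, moebius, div_sub_div _ _ hx hy]
  ring

theorem isFixedPt_moebius_iff (hz : b * z + c ≠ 0) :
    IsFixedPt (moebius d a b c) z ↔ b * z ^ 2 + (c - d) * z - a = 0 := by
  rw [IsFixedPt, moebius, div_eq_iff hz, ← sub_eq_zero, ← neg_eq_zero]
  ring_nf

end Field

section NormedField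

variable {K : Type*} [NormedField K] {a b c d s t x z : K}

theorem norm_eq_norm_of_norm_sq_div_sq_eq_one (h : ‖s ^ 2 / t ^ 2‖ = 1) : ‖s‖ = ‖t‖ := by
  rw [← div_pow, norm_pow, pow_eq_one_iff_of_nonneg (norm_nonneg _) two_ne_zero, norm_div] at h
  exact eq_of_div_eq_one h

theorem dist_pole (hb : b ≠ 0) : dist (-c / b) x = ‖(b * x + c) / b‖ := by
  rw [dist_comm, dist_eq_norm]
  congr 1
  field_simp
  ring

variable [IsUltrametricDist K]

theorem norm_denom_eq_of_dist_lt_dist_pole (hb : b ≠ 0) (hx : dist x z < dist (-c / b) z) :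
    ‖b * x + c‖ = ‖b * z + c‖ := by
  have hne : dist (-c / b) z ≠ dist z x := by rw [dist_comm z]; exact hx.ne'
  have hdist : dist (-c / b) x = dist (-c / b) z := by
    rw [IsUltrametricDist.dist_eq_max_of_dist_ne_dist _ _ _ hne, dist_comm z, max_eq_left hx.le]
  rwa [dist_pole hb, dist_pole hb, norm_div, norm_div,
    div_left_inj' (norm_ne_zero_iff.2 hb)] at hdist

theorem dist_moebius_moebius (hb : b ≠ 0) (hx : dist x z < dist (-c / b) z) :
    dist (moebius d a b c x) (moebius d a b c z) =
      ‖(d * c - a * b) / (b * z + c) ^ 2‖ * dist x z := by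
  have hz : b * z + c ≠ 0 := by
    intro hz
    rw [dist_pole hb, hz, zero_div, norm_zero] at hx
    exact dist_nonneg.not_gt hx
  have hden : ‖b * x + c‖ = ‖b * z + c‖ := norm_denom_eq_of_dist_lt_dist_pole hb hx
  have hx₀ : b * x + c ≠ 0 := norm_ne_zero_iff.1 (hden ▸ norm_ne_zero_iff.2 hz)
  simp only [dist_eq_norm, moebius_sub_moebius hx₀ hz, norm_div, norm_mul, norm_pow, hden]
  ring

theorem isSiegelDisk_moebius_iff (hb : b ≠ 0) (hz : IsFixedPt (moebius d a b c) z)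
    (hmult : ‖(d * c - a * b) / (b * z + c) ^ 2‖ = 1) {r : ℝ} :
    IsSiegelDisk (moebius d a b c) {-c / b}ᶜ z r ↔ r ≤ dist (-c / b) z := by
  constructor
  · intro hdisk
    by_contra! hlt
    exact (hdisk _ hlt).1 (mem_sphere.2 rfl) rfl
  · intro hr ρ hρ
    have hρ_pole : ρ < dist (-c / b) z := hρ.trans_le hr
    refine ⟨?_, fun x hx => ?_⟩
    · rintro x hx rfl
      exact hρ_pole.ne' hx
    · have hdist := dist_moebius_moebius (d := d) (a := a) hb (hx.trans_lt hρ_pole)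
      rw [hz.eq, hmult, one_mul] at hdist
      exact hdist.trans hx

theorem stmt16_general {f : K → K} (hb : b ≠ 0) (hf : ∀ x, f x = (d * x + a) / (b * x + c))
    (hs : s ^ 2 = d * c - a * b) (hz : b * z ^ 2 + (c - d) * z - a = 0)
    (hmult : ‖(d * c - a * b) / (b * z + c) ^ 2‖ = 1) :
    (∀ r, IsSiegelDisk f {-c / b}ᶜ z r ↔ r ≤ ‖s / b‖) ∧ ‖-c / b - z‖ = ‖s / b‖ := by
  obtain rfl : f = moebius d a b c := funext hf
  have hden : b * z + c ≠ 0 := by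
    intro h
    simp [h] at hmult
  have hfix : IsFixedPt (moebius d a b c) z := (isFixedPt_moebius_iff hden).2 hz
  have hnorm : ‖s‖ = ‖b * z + c‖ := norm_eq_norm_of_norm_sq_div_sq_eq_one (hs ▸ hmult)
  have hpole : dist (-c / b) z = ‖s / b‖ := by rw [dist_pole hb, norm_div, norm_div, hnorm]
  exact ⟨fun r => hpole ▸ isSiegelDisk_moebius_iff hb hfix hmult, by rw [← dist_eq_norm, hpole]⟩

end NormedField

/-- `ℂ_p` is modelled as a complete, algebraically closed,
nontrivially normed ultrametric field `K` which is a normed `ℚ_[p]`-algebra; its norm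
`‖·‖` plays the role of `|·|_p`. Fix `a b c ∈ K` with `b ≠ 0`, `c ≠ a*b`, and let
`f x = (x+a)/(b*x+c)` (defined for `x ≠ x̂ = -c/b`). Let `s` satisfy `s² = c - ab`,
suppose `‖b‖ < ‖s‖`, let `x₁, x₂` be the fixed points of `f` (roots of
`bx² + (c-1)x - a = 0`), and suppose `|f'(xᵢ)|_p = ‖(c-ab)/(b*xᵢ+c)²‖ = 1` for
`i = 1, 2`. Then for each `i` the maximal Siegel disk of `f` at `xᵢ` is the open ball
of radius `‖s/b‖`:
(i) for every `ρ` with `0 < ρ < ‖s/b‖` and every `x` with `‖x - xᵢ‖ = ρ`, the whole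
forward orbit of `x` is defined and `‖f^[n] x - xᵢ‖ = ρ` for all `n ≥ 1`;
(ii) the sphere `S_{‖s/b‖}(xᵢ)` is not invariant: `‖x̂ - xᵢ‖ = ‖s/b‖`, so `f` is
undefined at a point of this sphere. -/
theorem stmt16 (p : ℕ) [Fact p.Prime] (K : Type*) [NontriviallyNormedField K]
    [IsUltrametricDist K] [IsAlgClosed K] [CompleteSpace K] [NormedAlgebra ℚ_[p] K]
    (a b c : K) (hb : b ≠ 0) (hc : c ≠ a * b)
    (f : K → K) (hf : ∀ x, f x = (x + a) / (b * x + c))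
    (s : K) (hs : s ^ 2 = c - a * b) (hbs : ‖b‖ < ‖s‖)
    (x₁ x₂ : K) (hx₁ : b * x₁ ^ 2 + (c - 1) * x₁ - a = 0)
    (hx₂ : b * x₂ ^ 2 + (c - 1) * x₂ - a = 0)
    (hder₁ : ‖(c - a * b) / (b * x₁ + c) ^ 2‖ = 1)
    (hder₂ : ‖(c - a * b) / (b * x₂ + c) ^ 2‖ = 1) :
    ∀ xi : K, (xi = x₁ ∨ xi = x₂) →
      ((∀ ρ : ℝ, 0 < ρ → ρ < ‖s / b‖ → ∀ x : K, ‖x - xi‖ = ρ →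
          (∀ n : ℕ, f^[n] x ≠ -c / b) ∧ (∀ n : ℕ, 1 ≤ n → ‖f^[n] x - xi‖ = ρ)) ∧
       ‖-c / b - xi‖ = ‖s / b‖) := by
  intro xi hxi
  have hmain : (∀ r, IsSiegelDisk f {-c / b}ᶜ xi r ↔ r ≤ ‖s / b‖) ∧ ‖-c / b - xi‖ = ‖s / b‖ := by
    rcases hxi with rfl | rfl <;> apply stmt16_general (d := 1) hb <;> simpa only [one_mul]
  refine hmain.imp_left fun hdisk ρ _ hρ x hx => ?_
  have horbit := ((hdisk _).2 le_rfl).iterate_mem hρ (mem_sphere_iff_norm.2 hx)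
  exact ⟨fun n => (horbit n).1, fun n _ => mem_sphere_iff_norm.1 (horbit n).2⟩
end
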